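/- Let q be a prime power, let n ≥ 1, let s be an integer with gcd(s,n) = 1, and put σ = q^s. Let f(x) = Σ_{i=0}^{n−1} a_i x^{σ^i} ∈ F_{q^n}[x]. Then for 0 ≤ μ ≤ n−1: the F_q-dimension of the kernel of the F_q-linear transformation of F_{q^n} induced by f equals μ if and only if det(D_{0,σ}(f)) = det(D_{1,σ}(f)) = … = det(D_{μ−1,σ}(f)) = 0 and det(D_{μ,σ}(f)) ≠ 0. -/

import Mathlib

/-!
Let `φ` be the automorphism `x ↦ x ^ σ` of `F`. Since `gcd(s, n) = 1`, its fixed field `K` has `q`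
elements (`card_fixed`), so `[F : K] = n`, `φ ^ n = 1` and `f = ∑ a_i φ^i` is `K`-linear. The key
fact (`finrank_ker_skewOp_lt`) is that a nonzero `∑_{i<d} c_i φ^i` has kernel of dimension less
than `d` over `K`.

Row `i` of the Dickson matrix lists the coefficients of `φ^i ∘ f`. Hence a left null vector `c` of
`D_m` is the same thing as an operator `g = ∑_{i<n-m} c_i φ^i` such that `g ∘ f` has `σ`-degree
less than `m` (`vecMul_dickSub`, `skewOp_comp`). Put `k = dim ker f`. For `m < k` such a nonzero `g`
exists already with `g ∘ f = 0`, by counting dimensions on the image of `f`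
(`det_dickSub_eq_zero`); for `m = k` the key fact, applied to `g ∘ f` and to `g`, excludes it
(`det_dickSub_ne_zero`). Thus `k` is the least `m` with `det D_m ≠ 0`, and the kernel has `q ^ k`
elements.
-/

/-- `D_{m,σ}(f)`: the `(n-m) × (n-m)` matrix obtained from the `σ`-Dickson matrix of
`f = ∑_{i=0}^{n-1} a_i x^{σ^i}` by removing its first `m` columns and last `m` rows;
entry `(i,j)` is `a_((j+m-i) mod n) ^ (σ ^ i)` (here the first argument plays the
role of `σ`). -/
noncomputable def dickSub (σ n m : ℕ) {F : Type*} [Field F] (a : ℕ → F) :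
    Matrix (Fin (n - m)) (Fin (n - m)) F :=
  Matrix.of fun i j => a ((j.val + m + n - i.val) % n) ^ σ ^ i.val

section

open Finset

variable {K F : Type*} [Field K] [Field F] [Algebra K F]

/-- The operator `∑_{i<d} c_i φ^i` on `F`, that is, the `σ`-polynomial of `σ`-degree less than `d`
with coefficients `c`. Only the values of `c` below `d` matter. -/
noncomputable def skewOp (φ : F →ₐ[K] F) (d : ℕ) (c : ℕ → F) : F →ₗ[K] F :=
  ∑ i ∈ range d, c i • (φ ^ i).toLinearMap

theorem skewOp_apply (φ : F →ₐ[K] F) (d : ℕ) (c : ℕ → F) (x : F) :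
    skewOp φ d c x = ∑ i ∈ range d, c i * (φ ^ i) x := by
  simp [skewOp]

/-- Summation by parts. If `∑ c_i = 0`, then `∑_{i≤d} c_i φ^i` factors as an operator of smaller
degree composed with `φ - 1`. -/
theorem abel_diff {R : Type*} [CommRing R] (c u : ℕ → R) (d : ℕ) :
    ∑ i ∈ range (d + 1), c i * u i = (∑ i ∈ range (d + 1), c i) * u d +
      ∑ i ∈ range d, (-∑ j ∈ range (i + 1), c j) * (u (i + 1) - u i) := by
  induction d with
  | zero => simp
  | succ d ih =>
    rw [sum_range_succ, ih, sum_range_succ c (d + 1),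
      sum_range_succ (fun i => (-∑ j ∈ range (i + 1), c j) * (u (i + 1) - u i)) d]
    ring

/-- A nonzero `σ`-polynomial of `σ`-degree less than `d` has kernel of dimension less than `d` over
the fixed field of `φ`. A nonzero kernel element `v` can be moved to `1` by the substitution
`x = v z`, so the operator factors through `φ - 1`, whose kernel is one-dimensional, and the
cofactor has smaller degree. -/
theorem finrank_ker_skewOp_lt [FiniteDimensional K F] (φ : F →ₐ[K] F)
    (hfix : ∀ x, φ x = x → ∃ k, algebraMap K F k = x) (d : ℕ) (c : ℕ → F)
    (hc : ∃ i < d, c i ≠ 0) : Module.finrank K (LinearMap.ker (skewOp φ d c)) < d := by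
  induction d generalizing c with
  | zero => simp at hc
  | succ d ih =>
    by_cases hbot : LinearMap.ker (skewOp φ (d + 1) c) = ⊥
    · rw [hbot, finrank_bot]
      omega
    obtain ⟨v, hv, hv0⟩ := (Submodule.ne_bot_iff _).1 hbot
    rw [LinearMap.mem_ker, skewOp_apply] at hv
    set c' : ℕ → F := fun i => c i * (φ ^ i) v with hc'
    set b : ℕ → F := fun i => -∑ j ∈ range (i + 1), c' j with hb
    have hφv : ∀ i, (φ ^ i) v ≠ 0 := fun i => (map_ne_zero _).2 hv0
    have hbne : ∃ i < d, b i ≠ 0 := by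
      by_contra! hcon
      have hpart : ∀ i ≤ d + 1, ∑ j ∈ range i, c' j = 0 := by
        intro i hi
        rcases i with _ | i
        · simp
        · rcases Nat.lt_or_ge i d with h | h
          · simpa [hb] using hcon i h
          · obtain rfl : i = d := by omega
            exact hv
      obtain ⟨i, hi, hci⟩ := hc
      have h1 := hpart (i + 1) (by omega)
      rw [sum_range_succ, hpart i (by omega), zero_add] at h1
      exact (mul_ne_zero hci (hφv i)) h1
    have hrank := ih b hbne
    let T : F →ₗ[K] F := (φ.toLinearMap - LinearMap.id) ∘ₗ LinearMap.mulLeft K v⁻¹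
    have hT : ∀ x, T x = φ (v⁻¹ * x) - v⁻¹ * x := fun x => rfl
    have hfac : ∀ x, skewOp φ (d + 1) c x = skewOp φ d b (T x) := by
      intro x
      have h1 : skewOp φ (d + 1) c x = ∑ i ∈ range (d + 1), c' i * (φ ^ i) (v⁻¹ * x) := by
        rw [skewOp_apply]
        refine sum_congr rfl fun i _ => ?_
        rw [hc', mul_assoc, ← map_mul, mul_inv_cancel_left₀ hv0]
      rw [h1, abel_diff, skewOp_apply, show ∑ i ∈ range (d + 1), c' i = 0 from hv, zero_mul,
        zero_add]
      refine sum_congr rfl fun i _ => ?_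
      rw [hT, map_sub, pow_succ, AlgHom.mul_apply]
    have hkerT : Module.finrank K (LinearMap.ker T) ≤ 1 := by
      have hle : LinearMap.ker T ≤ Submodule.span K {v} := by
        intro x hx
        rw [LinearMap.mem_ker, hT, sub_eq_zero] at hx
        obtain ⟨k, hk⟩ := hfix _ hx
        rw [Submodule.mem_span_singleton]
        refine ⟨k, ?_⟩
        rw [Algebra.smul_def, hk]
        field_simp
      exact (Submodule.finrank_mono hle).trans (finrank_span_singleton hv0).le
    let R := T.domRestrict (LinearMap.ker (skewOp φ (d + 1) c))
    have hRN := LinearMap.finrank_range_add_finrank_ker R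
    have h1 : Module.finrank K (LinearMap.range R) ≤
        Module.finrank K (LinearMap.ker (skewOp φ d b)) := by
      apply Submodule.finrank_mono
      rintro _ ⟨⟨x, hx⟩, rfl⟩
      rw [LinearMap.mem_ker] at hx ⊢
      rw [← hx, hfac x]
      rfl
    have h2 : Module.finrank K (LinearMap.ker R) ≤ Module.finrank K (LinearMap.ker T) := by
      let g : LinearMap.ker R →ₗ[K] LinearMap.ker T :=
        ((Submodule.subtype _) ∘ₗ (Submodule.subtype _)).codRestrict _ (fun x => x.2)
      refine LinearMap.finrank_le_finrank_of_injective (f := g) ?_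
      intro x y hxy
      exact Subtype.ext (Subtype.ext (congrArg (Subtype.val : LinearMap.ker T → F) hxy))
    omega

theorem pow_apply_eq (φ : F →ₐ[K] F) {σ : ℕ} (hσ : ∀ x, φ x = x ^ σ) (i : ℕ) (x : F) :
    (φ ^ i) x = x ^ σ ^ i := by
  induction i with
  | zero => simp
  | succ i ih => rw [pow_succ', AlgHom.mul_apply, ih, hσ, ← pow_mul, ← pow_succ]

/-- The `j`-th coefficient of the composition `(∑_{i<d} c_i φ^i) ∘ (∑_{l<n} a_l φ^l)`, reduced
modulo `φ^n = 1`. The index `j - i` modulo `n` is written `(j + n - i) % n`, which is correct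
for `i ≤ j + n`. -/
noncomputable def compCoeff (φ : F →ₐ[K] F) (n d : ℕ) (c a : ℕ → F) (j : ℕ) : F :=
  ∑ i ∈ range d, c i * (φ ^ i) (a ((j + n - i) % n))

theorem skewOp_comp (φ : F →ₐ[K] F) {n d : ℕ} (hφ : φ ^ n = 1) (hd : d ≤ n) (c a : ℕ → F)
    (x : F) : skewOp φ d c (skewOp φ n a x) = skewOp φ n (compCoeff φ n d c a) x := by
  have hmod : ∀ k, φ ^ (k % n) = φ ^ k := fun k => by
    conv_rhs => rw [← Nat.mod_add_div k n, pow_add, pow_mul, hφ, one_pow, mul_one]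
  simp only [skewOp_apply, compCoeff, sum_mul]
  rw [sum_comm]
  refine sum_congr rfl fun i hi => ?_
  have hin : i < n := (mem_range.1 hi).trans_le hd
  rw [map_sum, mul_sum]
  have hback : ∀ l < n, ((i + l) % n + n - i) % n = l := by
    intro l hl
    rcases Nat.lt_or_ge (i + l) n with h | h
    · rw [Nat.mod_eq_of_lt h, show i + l + n - i = l + n by omega, Nat.add_mod_right,
        Nat.mod_eq_of_lt hl]
    · rw [Nat.mod_eq_sub_mod h, Nat.mod_eq_of_lt (by omega : i + l - n < n),
        show i + l - n + n - i = l by omega, Nat.mod_eq_of_lt hl]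
  refine sum_nbij' (fun l => (i + l) % n) (fun j => (j + n - i) % n) ?_ ?_ ?_ ?_ ?_
  · exact fun l _ => mem_range.2 (Nat.mod_lt _ (by omega))
  · exact fun l _ => mem_range.2 (Nat.mod_lt _ (by omega))
  · exact fun l hl => hback l (mem_range.1 hl)
  · intro j hj
    have hj := mem_range.1 hj
    rw [Nat.add_mod_mod, show i + (j + n - i) = j + n by omega, Nat.add_mod_right,
      Nat.mod_eq_of_lt hj]
  · intro l hl
    rw [hback l (mem_range.1 hl), hmod, pow_add, AlgHom.mul_apply, map_mul, mul_assoc]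

/-- The rows of the Dickson matrix are the coefficient vectors of `φ^i ∘ f`, so multiplying
`D_m` on the left by `c` gives the coefficients of `(∑_{i<n-m} c_i φ^i) ∘ f` of index at least
`m`. -/
theorem vecMul_dickSub (φ : F →ₐ[K] F) {σ : ℕ} (hσ : ∀ x, φ x = x ^ σ) (n m : ℕ) (a c : ℕ → F)
    (j : Fin (n - m)) :
    Matrix.vecMul (fun i : Fin (n - m) => c i) (dickSub σ n m a) j =
      compCoeff φ n (n - m) c a (j + m) := by
  simp only [Matrix.vecMul, dotProduct, dickSub, Matrix.of_apply, compCoeff, pow_apply_eq φ hσ]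
  exact Fin.sum_univ_eq_sum_range
    (fun i => c i * a ((j.val + m + n - i) % n) ^ σ ^ i) (n - m)

/-- If `ker f` has dimension exactly `m`, a left null vector of `D_m` is some `g` of degree less than
`n - m` with `g ∘ f` of degree less than `m`. As `g ∘ f` kills the `m`-dimensional `ker f`, it is
zero; then `g` kills the `(n - m)`-dimensional image of `f`, so `g = 0`. -/
theorem det_dickSub_ne_zero [FiniteDimensional K F] (φ : F →ₐ[K] F)
    (hfix : ∀ x, φ x = x → ∃ k, algebraMap K F k = x) {σ : ℕ} (hσ : ∀ x, φ x = x ^ σ)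
    {n m : ℕ} (hφ : φ ^ n = 1) (hn : Module.finrank K F = n) (a : ℕ → F)
    (hm : Module.finrank K (LinearMap.ker (skewOp φ n a)) = m) :
    (dickSub σ n m a).det ≠ 0 := by
  intro hdet
  obtain ⟨w, hw0, hw⟩ := Matrix.exists_vecMul_eq_zero_iff.2 hdet
  have hmn : m ≤ n := by rw [← hm, ← hn]; exact Submodule.finrank_le _
  set c : ℕ → F := fun i => if h : i < n - m then w ⟨i, h⟩ else 0 with hc
  have hcw : (fun i : Fin (n - m) => c i) = w := by funext i; simp [hc]
  set e := compCoeff φ n (n - m) c a with he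
  have hhigh : ∀ j, m ≤ j → j < n → e j = 0 := by
    intro j h1 h2
    have := vecMul_dickSub φ hσ n m a c ⟨j - m, by omega⟩
    rw [hcw, hw] at this
    simpa [Nat.sub_add_cancel h1] using this.symm
  have hcut : skewOp φ n e = skewOp φ m e := by
    refine (sum_subset (range_mono hmn) fun j h1 h2 => ?_).symm
    rw [hhigh j (by simpa using h2) (by simpa using h1), zero_smul]
  -- Otherwise `g ∘ f`, of degree less than `m`, would be nonzero with kernel containing `ker f`.
  have hlow : ∀ j < m, e j = 0 := by
    by_contra! hcon
    have hlt := finrank_ker_skewOp_lt φ hfix m e hcon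
    have hle : LinearMap.ker (skewOp φ n a) ≤ LinearMap.ker (skewOp φ m e) := by
      intro x hx
      rw [LinearMap.mem_ker] at hx ⊢
      rw [← hcut, he, ← skewOp_comp φ hφ (Nat.sub_le _ _), hx, map_zero]
    have := Submodule.finrank_mono hle
    omega
  have hle : LinearMap.range (skewOp φ n a) ≤ LinearMap.ker (skewOp φ (n - m) c) := by
    rintro _ ⟨x, rfl⟩
    rw [LinearMap.mem_ker, skewOp_comp φ hφ (Nat.sub_le _ _), ← he, hcut, skewOp_apply]
    exact sum_eq_zero fun j hj => by rw [hlow j (mem_range.1 hj), zero_mul]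
  have hcne : ∃ i < n - m, c i ≠ 0 := by
    obtain ⟨i, hi⟩ := Function.ne_iff.1 hw0
    exact ⟨i, i.2, by simpa [hc] using hi⟩
  have h1 := finrank_ker_skewOp_lt φ hfix _ c hcne
  have h2 := Submodule.finrank_mono hle
  have h3 := LinearMap.finrank_range_add_finrank_ker (skewOp φ n a)
  omega

/-- If `m < dim ker f`, the image of `f` has dimension less than `n - m`, so the linear system for an
operator `g` of degree less than `n - m` annihilating the image has a nonzero solution. Since
`g ∘ f = 0`, the coefficients of `g` form a left null vector of `D_m`. -/
theorem det_dickSub_eq_zero [FiniteDimensional K F] (φ : F →ₐ[K] F)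
    (hfix : ∀ x, φ x = x → ∃ k, algebraMap K F k = x) {σ : ℕ} (hσ : ∀ x, φ x = x ^ σ)
    {n m : ℕ} (hφ : φ ^ n = 1) (hn : Module.finrank K F = n) (a : ℕ → F)
    (hm : m < Module.finrank K (LinearMap.ker (skewOp φ n a))) :
    (dickSub σ n m a).det = 0 := by
  have h3 := LinearMap.finrank_range_add_finrank_ker (skewOp φ n a)
  set r := Module.finrank K (LinearMap.range (skewOp φ n a)) with hr
  let y := Module.finBasisOfFinrankEq K (LinearMap.range (skewOp φ n a)) hr.symm
  let M : Matrix (Fin (n - m)) (Fin r) F := Matrix.of fun i j => (φ ^ i.val) (y j : F)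
  have hker : LinearMap.ker M.vecMulLinear ≠ ⊥ := by
    apply LinearMap.ker_ne_bot_of_finrank_lt
    simp only [Module.finrank_fintype_fun_eq_card, Fintype.card_fin]
    omega
  obtain ⟨w, hw, hw0⟩ := (Submodule.ne_bot_iff _).1 hker
  rw [LinearMap.mem_ker] at hw
  set c : ℕ → F := fun i => if h : i < n - m then w ⟨i, h⟩ else 0 with hc
  have hcw : (fun i : Fin (n - m) => c i) = w := by funext i; simp [hc]
  have hy : ∀ j, skewOp φ (n - m) c (y j) = 0 := by
    intro j
    rw [skewOp_apply, ← Fin.sum_univ_eq_sum_range (fun i => c i * (φ ^ i) (y j : F))]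
    have := congrFun hw j
    rw [← hcw] at this
    exact this
  have hzero : skewOp φ (n - m) c ∘ₗ (LinearMap.range (skewOp φ n a)).subtype = 0 :=
    y.ext fun j => by simpa using hy j
  have hall : ∀ x, skewOp φ n (compCoeff φ n (n - m) c a) x = 0 := by
    intro x
    rw [← skewOp_comp φ hφ (Nat.sub_le _ _)]
    exact LinearMap.congr_fun hzero ⟨_, x, rfl⟩
  have he : ∀ j < n, compCoeff φ n (n - m) c a j = 0 := by
    by_contra! hcon
    have hlt := finrank_ker_skewOp_lt φ hfix n _ hcon
    rw [LinearMap.ker_eq_top.2 (LinearMap.ext hall), finrank_top, hn] at hlt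
    exact lt_irrefl _ hlt
  refine Matrix.exists_vecMul_eq_zero_iff.1 ⟨w, hw0, ?_⟩
  funext j
  rw [← hcw, vecMul_dickSub φ hσ]
  exact he _ (by omega)

/-- The fixed field of `x ↦ x ^ (q ^ s)` has `q` elements: the unit group is cyclic of order
`q ^ n - 1`, and `gcd (q ^ n - 1) (q ^ s - 1) = q ^ gcd n s - 1`. -/
theorem card_fixed {q n s : ℕ} (hq : 1 < q) (hs : Nat.gcd s n = 1) (F : Type*) [Field F]
    [Fintype F] (hF : Fintype.card F = q ^ n) :
    Nat.card {x : F // x ^ q ^ s = x} = q := by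
  classical
  have hpos : 0 < q ^ s := by positivity
  have hker := IsCyclic.card_powMonoidHom_ker (G := Fˣ) (q ^ s - 1)
  rw [Nat.card_units, Nat.card_eq_fintype_card (α := F), hF, Nat.pow_sub_one_gcd_pow_sub_one,
    Nat.gcd_comm, hs, pow_one] at hker
  -- The fixed points are zero together with the units killed by `q ^ s - 1`.
  let E : Option (powMonoidHom (q ^ s - 1) : Fˣ →* Fˣ).ker ≃ {x : F // x ^ q ^ s = x} :=
    Equiv.ofBijective (fun o => o.elim ⟨0, zero_pow hpos.ne'⟩
      (fun u => ⟨((u : Fˣ) : F), by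
        have h := u.2
        rw [MonoidHom.mem_ker, powMonoidHom_apply] at h
        have h' : ((u : Fˣ) : F) ^ (q ^ s - 1) = 1 := by
          rw [← Units.val_pow_eq_pow_val, h, Units.val_one]
        rw [← pow_sub_one_mul hpos.ne', h', one_mul]⟩)) <| by
      constructor
      · rintro (_ | u) (_ | v) h
        · rfl
        · exact absurd (congrArg Subtype.val h).symm (v : Fˣ).ne_zero
        · exact absurd (congrArg Subtype.val h) (u : Fˣ).ne_zero
        · exact congrArg some (Subtype.ext (Units.ext (congrArg Subtype.val h)))
      · rintro ⟨x, hx⟩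
        by_cases hx0 : x = 0
        · exact ⟨none, Subtype.ext hx0.symm⟩
        · refine ⟨some ⟨Units.mk0 x hx0, ?_⟩, rfl⟩
          rw [MonoidHom.mem_ker, powMonoidHom_apply]
          apply Units.ext
          rw [← Nat.sub_add_cancel hpos, pow_succ] at hx
          simpa using mul_right_cancel₀ hx0 (hx.trans (one_mul x).symm)
  rw [← Nat.card_congr E, Finite.card_option, hker]
  omega

end

/-- Corollary: for `σ = q^s` with `gcd(s,n) = 1` and
`f = ∑_{i=0}^{n-1} a_i x^{σ^i} ∈ F_{q^n}[x]`, and `0 ≤ μ ≤ n-1`: the `F_q`-dimension of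
the kernel of the `F_q`-linear map induced by `f` equals `μ` (i.e. the kernel has `q^μ`
elements) iff `det D_{0,σ}(f) = ⋯ = det D_{μ-1,σ}(f) = 0` and `det D_{μ,σ}(f) ≠ 0`. -/
theorem stmt_7 (p e q n s : ℕ) (hp : p.Prime) (he : 0 < e) (hq : q = p ^ e)
    (hn : 0 < n) (hs : Nat.gcd s n = 1)
    (F : Type*) [Field F] [Fintype F] (hF : Fintype.card F = q ^ n)
    (a : ℕ → F) (μ : ℕ) (hμ : μ ≤ n - 1) :
    Nat.card {x : F // ∑ i ∈ Finset.range n, a i * x ^ (q ^ s) ^ i = 0} = q ^ μ ↔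
      (∀ m, m < μ → (dickSub (q ^ s) n m a).det = 0) ∧ (dickSub (q ^ s) n μ a).det ≠ 0 := by
  have hq1 : 1 < q := hq ▸ Nat.one_lt_pow he.ne' hp.one_lt
  have : Fact p.Prime := ⟨hp⟩
  have : CharP F p := charP_of_card_eq_prime_pow (f := e * n) (by rw [hF, hq, pow_mul])
  let φ₀ : F →+* F := iterateFrobenius F p (e * s)
  have hφ₀ : ∀ x, φ₀ x = x ^ q ^ s := fun x => by
    rw [hq, ← pow_mul]; exact iterateFrobenius_def ..
  let K : Subfield F := RingHom.eqLocusField φ₀ (RingHom.id F)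
  have hK : ∀ x, x ∈ K ↔ φ₀ x = x := fun x => Iff.rfl
  let φ : F →ₐ[K] F := { φ₀ with commutes' := fun k => k.2 }
  have hσ : ∀ x, φ x = x ^ q ^ s := hφ₀
  have hfix : ∀ x, φ x = x → ∃ k, algebraMap K F k = x := fun x hx => ⟨⟨x, hx⟩, rfl⟩
  have hcardK : Nat.card K = q := by
    rw [← card_fixed hq1 hs F hF]
    exact Nat.card_congr (Equiv.subtypeEquivRight fun x => by rw [hK, hφ₀])
  have hfin : Module.finrank K F = n := by
    have h := Module.natCard_eq_pow_finrank (K := K) (V := F)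
    rw [hcardK, Nat.card_eq_fintype_card, hF] at h
    exact (Nat.pow_right_injective hq1 h).symm
  have hφn : φ ^ n = 1 := by
    ext x
    rw [pow_apply_eq φ hσ, ← pow_mul, mul_comm, pow_mul, ← hF, FiniteField.pow_card_pow]
    rfl
  set k := Module.finrank K (LinearMap.ker (skewOp φ n a)) with hk
  have hcard : Nat.card {x : F // ∑ i ∈ Finset.range n, a i * x ^ (q ^ s) ^ i = 0} = q ^ k := by
    have h := Module.natCard_eq_pow_finrank (K := K) (V := LinearMap.ker (skewOp φ n a))
    rw [hcardK, ← hk] at h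
    rw [← h]
    refine Nat.card_congr (Equiv.subtypeEquivRight fun x => ?_)
    simp only [LinearMap.mem_ker, skewOp_apply, pow_apply_eq φ hσ]
  have hne := det_dickSub_ne_zero φ hfix hσ hφn hfin a hk.symm
  have hzero : ∀ m < k, (dickSub (q ^ s) n m a).det = 0 := fun m hm =>
    det_dickSub_eq_zero φ hfix hσ hφn hfin a hm
  rw [hcard, Nat.pow_right_inj hq1]
  constructor
  · rintro rfl
    exact ⟨hzero, hne⟩
  · rintro ⟨h1, h2⟩
    rcases lt_trichotomy k μ with h | h | h
    · exact absurd (h1 k h) hne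
    · exact h
    · exact absurd (hzero μ h) h2
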